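/- arXiv:2506.18762 — 3 statements merged into one kernel-verified Lean document; each statement's English description precedes it below -/
import Mathlib

section
/- Let S ⊆ ℕ be a finite set with |S| = 2m ≥ 2 and let 𝒫 = P_1|P_2|…|P_m ∈ π₂(S) be a perfect matching in canonical form. Then sgn(𝒫) = (−1)^{Σ_{k=1}^{m} S(P_k, P_k ∪ P_{k+1} ∪ … ∪ P_m)}. -/
/-- A perfect matching of a finite set `S`: a partition of `S` into blocks of cardinality `2`.
The empty set has `∅` as its unique perfect matching. -/
def IsPerfectMatching {α : Type*} [DecidableEq α] (S : Finset α) (M : Finset (Finset α)) : Prop :=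
  (∀ b ∈ M, b.card = 2) ∧ (∀ b ∈ M, ∀ c ∈ M, b ≠ c → Disjoint b c) ∧ M.sup id = S

open Classical in
/-- `π₂ S`: the finset of all perfect matchings of `S`. -/
noncomputable def perfMatchings {α : Type*} [DecidableEq α] (S : Finset α) :
    Finset (Finset (Finset α)) :=
  S.powerset.powerset.filter (fun M => IsPerfectMatching S M)

/-- The larger element of a block of natural numbers. -/
def bmax (b : Finset ℕ) : ℕ := b.sup id

/-- The smaller element of a block of natural numbers. -/
def bmin (b : Finset ℕ) : ℕ := (b.erase (bmax b)).sup id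

/-- The block of the matching `M` containing `v`. -/
def blockOf (M : Finset (Finset ℕ)) (v : ℕ) : Finset ℕ := (M.filter (fun b => v ∈ b)).sup id

/-- The blocks `P_1 | P_2 | … | P_m` of the matching `M` in canonical order, i.e. listed
in increasing order of their larger elements. -/
def blockList (M : Finset (Finset ℕ)) : List (Finset ℕ) :=
  ((M.image bmax).sort (· ≤ ·)).map (blockOf M)

/-- The bottom row `[s_{1_1}, s_{1_2}, s_{2_1}, s_{2_2}, …]` of the two-line representation of
the permutation `σ_𝒫` associated to the canonical form of the matching `M`. -/
def flatList (M : Finset (Finset ℕ)) : List ℕ :=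
  (blockList M).foldr (fun b l => bmin b :: bmax b :: l) []

/-- The number of inversions of a list of naturals. -/
def inversions (l : List ℕ) : ℕ :=
  ∑ i ∈ Finset.range l.length, ∑ j ∈ Finset.range l.length,
    if i < j ∧ l.getD j 0 < l.getD i 0 then 1 else 0

/-- The sign of a perfect matching `M` of a finset of naturals: the sign of the associated
permutation `σ_𝒫`, i.e. the parity of the number of inversions of the bottom row of its
two-line representation (the top row being the elements of `S` sorted increasingly). -/
def pmSign (M : Finset (Finset ℕ)) : ℤ := (-1) ^ inversions (flatList M)

/-- `S(F, P)`: the sum of the (1-based) positions inside `P` of the elements of `F`, minus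
`r (r + 1) / 2` where `r = |F|`. -/
def SP (F P : Finset ℕ) : ℕ :=
  (∑ i ∈ F, ((P.filter (fun p => p < i)).card + 1)) - F.card * (F.card + 1) / 2

/-- `e_T`: the product, in the exterior algebra, of the generators indexed by `T`, taken in
increasing order. -/
noncomputable def eProd (k : Type*) {V : Type*} [Field k] [AddCommGroup V] [Module k V]
    (e : ℕ → V) (T : Finset ℕ) : ExteriorAlgebra k V :=
  ((T.sort (· ≤ ·)).map (fun i => ExteriorAlgebra.ι k (e i))).prod

/-- `X_R`: the product, in the Clifford algebra, of the generators indexed by `R`, taken in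
increasing order. -/
noncomputable def XProd {k V : Type*} [Field k] [AddCommGroup V] [Module k V]
    (q : QuadraticForm k V) (e : ℕ → V) (R : Finset ℕ) : CliffordAlgebra q :=
  ((R.sort (· ≤ ·)).map (fun i => CliffordAlgebra.ι q (e i))).prod

/-- `d_P`: the composition of the skew-derivations indexed by `P`, taken in increasing order. -/
noncomputable def dComp {k V : Type*} [Field k] [AddCommGroup V] [Module k V]
    {q : QuadraticForm k V} (d : ℕ → Module.End k (CliffordAlgebra q)) (P : Finset ℕ) :
    Module.End k (CliffordAlgebra q) :=
  ((P.sort (· ≤ ·)).map d).prod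

/-- `Λ(𝒫)`: the product of `λ_{ab} = polar q (e a) (e b)` over the blocks `{a < b}` of the
matching `M`. -/
noncomputable def lamProd {k V : Type*} [Field k] [AddCommGroup V] [Module k V]
    (q : QuadraticForm k V) (e : ℕ → V) (M : Finset (Finset ℕ)) : k :=
  ∏ bl ∈ M, QuadraticMap.polar q (e (bmin bl)) (e (bmax bl))

/-- The element `u_Q` of the Clifford algebra. -/
noncomputable def uElem {k V : Type*} [Field k] [AddCommGroup V] [Module k V]
    (q : QuadraticForm k V) (e : ℕ → V) (μ : k) (Q : Finset ℕ) : CliffordAlgebra q :=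
  (μ / 2 ^ ((insert 0 Q).card / 2)) •
    ∑ R ∈ (insert 0 Q).powerset.filter (fun R => R.card % 2 = (insert 0 Q).card % 2),
      (((-1 : k) ^ (SP R (insert 0 Q) + ((insert 0 Q).card - R.card) / 2) * 2 ^ (R.card / 2)) *
        ∑ M ∈ perfMatchings ((insert 0 Q) \ R), (pmSign M : k) * lamProd q e M) • XProd q e R

/-!
The row `flatList M` is the concatenation of the increasing rows of the blocks, so an inversion of
it consists of an element of some block and a smaller element of a later block. The position of
`a ∈ F` in `P` is one more than the number of smaller elements of `P`. Those lying in `F` contribute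
`0 + 1 + ⋯ + (r - 1)` over all `a ∈ F`, which together with the `r` ones is the correction
`r (r + 1) / 2` in `S(F, P)`. Hence `S(F, P)` counts the pairs `(a, p)` with `a ∈ F`, `p ∈ P \ F`
and `p < a`, and the number of inversions equals `∑ S(P_k, P_k ∪ ⋯ ∪ P_m)`, for disjoint blocks
of any sizes in any order.
-/

open Finset

theorem sum_range_getD_ite_eq_countP {α : Type*} (p : α → Prop) [DecidablePred p] (d : α)
    (l : List α) :
    (∑ j ∈ range l.length, if p (l.getD j d) then 1 else 0) = l.countP (p ·) := by
  induction l with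
  | nil => rfl
  | cons a l ih =>
    rw [List.length_cons, sum_range_succ', List.countP_cons, ← ih]
    simp only [List.getD_cons_succ, List.getD_cons_zero, decide_eq_true_eq]

theorem inversions_nil : inversions [] = 0 := rfl

theorem inversions_cons (a : ℕ) (l : List ℕ) :
    inversions (a :: l) = l.countP (· < a) + inversions l := by
  unfold inversions
  rw [List.length_cons, sum_range_succ', add_comm, ← sum_range_getD_ite_eq_countP (· < a) 0]
  simp only [sum_range_succ', List.getD_cons_succ, List.getD_cons_zero, Nat.succ_pos,
    add_lt_add_iff_right, not_lt_zero, true_and, false_and, if_false, add_zero]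

theorem inversions_append (l₁ l₂ : List ℕ) :
    inversions (l₁ ++ l₂) =
      inversions l₁ + (l₁.map fun a => l₂.countP (· < a)).sum + inversions l₂ := by
  induction l₁ with
  | nil => simp [inversions_nil]
  | cons a l₁ ih =>
    rw [List.cons_append, inversions_cons, inversions_cons, ih, List.countP_append,
      List.map_cons, List.sum_cons]
    ring

theorem inversions_eq_zero_of_pairwise_le {l : List ℕ} (hl : l.Pairwise (· ≤ ·)) :
    inversions l = 0 := by
  induction hl with
  | nil => exact inversions_nil
  | cons ha _ ih => simpa [inversions_cons, ih] using ha

theorem inversions_sort_append (F : Finset ℕ) (l : List ℕ) :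
    inversions (F.sort ++ l) = ∑ a ∈ F, l.countP (· < a) + inversions l := by
  rw [inversions_append, inversions_eq_zero_of_pairwise_le (F.pairwise_sort (· ≤ ·)), zero_add,
    ← Multiset.sum_coe, ← Multiset.map_coe, sort_eq, sum_eq_multiset_sum]

theorem sum_card_filter_lt_self {α : Type*} [LinearOrder α] (s : Finset α) :
    ∑ a ∈ s, #{b ∈ s | b < a} = (#s).choose 2 := by
  rw [← card_product_filter_lt, card_filter, sum_product_right]
  simp only [card_filter]

theorem SP_union_of_disjoint {F G : Finset ℕ} (h : Disjoint F G) :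
    SP F (F ∪ G) = ∑ a ∈ F, #{p ∈ G | p < a} := by
  have positions : ∑ a ∈ F, (#{p ∈ F ∪ G | p < a} + 1) =
      (#F + 1).choose 2 + ∑ a ∈ F, #{p ∈ G | p < a} := by
    simp only [filter_union, card_union_of_disjoint (disjoint_filter_filter h), sum_add_distrib,
      sum_card_filter_lt_self, sum_const, smul_eq_mul, mul_one, Nat.choose_succ_succ' _ 1,
      Nat.choose_one_right]
    ring
  rw [SP, positions, Nat.choose_two_right, Nat.add_sub_cancel, mul_comm (#F + 1),
    Nat.add_sub_cancel_left]

theorem disjoint_foldr_union {α : Type*} [DecidableEq α] {F : Finset α} {L : List (Finset α)} :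
    Disjoint F (L.foldr (· ∪ ·) ∅) ↔ ∀ G ∈ L, Disjoint F G := by
  induction L with
  | nil => simp
  | cons G L ih => simp [ih]

theorem countP_flatMap_sort {α : Type*} [LinearOrder α] (p : α → Prop) [DecidablePred p]
    {L : List (Finset α)} (hL : L.Pairwise Disjoint) :
    (L.flatMap fun F => F.sort).countP (p ·) = #{x ∈ L.foldr (· ∪ ·) ∅ | p x} := by
  induction hL with
  | nil => rfl
  | @cons F L hF _ ih =>
    have disj : Disjoint F (L.foldr (· ∪ ·) ∅) := disjoint_foldr_union.mpr hF
    have block : F.sort.countP (p ·) = #{x ∈ F | p x} := by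
      rw [← Multiset.coe_countP, sort_eq, Multiset.countP_eq_card_filter, card_def, filter_val]
    rw [List.flatMap_cons, List.countP_append, ih, block, List.foldr_cons, filter_union,
      card_union_of_disjoint (disjoint_filter_filter disj)]

theorem inversions_flatMap_sort {L : List (Finset ℕ)} (hL : L.Pairwise Disjoint) :
    inversions (L.flatMap fun F => F.sort) =
      ∑ k ∈ range L.length, SP (L.getD k ∅) ((L.drop k).foldr (· ∪ ·) ∅) := by
  induction hL with
  | nil => rfl
  | @cons F L hF hL ih =>
    rw [List.flatMap_cons, inversions_sort_append, ih, List.length_cons, sum_range_succ',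
      add_comm]
    congr 1
    rw [List.drop_zero, List.foldr_cons, List.getD_cons_zero,
      SP_union_of_disjoint (disjoint_foldr_union.mpr hF)]
    exact sum_congr rfl fun a _ => countP_flatMap_sort (· < a) hL

theorem bmax_mem {b : Finset ℕ} (hb : b.Nonempty) : bmax b ∈ b := by
  simpa [bmax] using exists_mem_eq_sup b hb id

theorem sort_eq_bmin_bmax {b : Finset ℕ} (hb : #b = 2) : b.sort = [bmin b, bmax b] := by
  have hmax : bmax b ∈ b := bmax_mem (card_pos.mp (by lia))
  have erase_bmax : b.erase (bmax b) = {bmin b} := by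
    obtain ⟨x, hx⟩ := card_eq_one.mp ((card_erase_of_mem hmax).trans (by rw [hb]))
    rw [bmin, hx, sup_singleton, id]
  have bmin_lt_bmax : bmin b < bmax b := by
    obtain ⟨hne, hmin⟩ := mem_erase.mp (erase_bmax ▸ mem_singleton_self (bmin b))
    exact (le_sup (f := id) hmin).lt_of_ne hne
  have b_eq : b = [bmin b, bmax b].toFinset :=
    calc b = insert (bmax b) (b.erase (bmax b)) := (insert_erase hmax).symm
      _ = [bmin b, bmax b].toFinset := by simp [erase_bmax, pair_comm]
  conv_lhs => rw [b_eq]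
  exact (List.toFinset_sort _ (by simpa using bmin_lt_bmax.ne)).mpr
    (List.pairwise_pair.mpr bmin_lt_bmax.le)

theorem blockOf_of_mem {M : Finset (Finset ℕ)} (hM : (M : Set (Finset ℕ)).PairwiseDisjoint id)
    {b : Finset ℕ} (hb : b ∈ M) {v : ℕ} (hv : v ∈ b) : blockOf M v = b := by
  have : {c ∈ M | v ∈ c} = {b} := by
    ext c
    rw [mem_filter, mem_singleton]
    exact ⟨fun ⟨hc, hvc⟩ => hM.elim_finset hc hb v hvc hv, fun h => h ▸ ⟨hb, hv⟩⟩
  rw [blockOf, this, sup_singleton, id]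

theorem coe_blockList_of_pairwiseDisjoint {M : Finset (Finset ℕ)}
    (hM : (M : Set (Finset ℕ)).PairwiseDisjoint id) (hne : ∀ b ∈ M, b.Nonempty) :
    (blockList M : Multiset (Finset ℕ)) = M.val := by
  have blockOf_bmax : ∀ b ∈ M, blockOf M (bmax b) = b := fun b hb =>
    blockOf_of_mem hM hb (bmax_mem (hne b hb))
  have bmax_injOn : Set.InjOn bmax (M : Set (Finset ℕ)) :=
    Set.LeftInvOn.injOn (f₁' := blockOf M) blockOf_bmax
  rw [blockList, ← Multiset.map_coe, sort_eq, image_val_of_injOn bmax_injOn, Multiset.map_map]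
  exact (Multiset.map_congr rfl blockOf_bmax).trans M.val.map_id

theorem flatList_eq_flatMap_sort {M : Finset (Finset ℕ)} (hM : ∀ b ∈ blockList M, #b = 2) :
    flatList M = (blockList M).flatMap fun b => b.sort := by
  unfold flatList
  generalize blockList M = L at hM ⊢
  induction L with
  | nil => rfl
  | cons b L ih =>
    rw [List.forall_mem_cons] at hM
    rw [List.foldr_cons, ih hM.2, List.flatMap_cons, sort_eq_bmin_bmax hM.1, List.cons_append,
      List.cons_append, List.nil_append]

theorem mem_perfMatchings {α : Type*} [DecidableEq α] {S : Finset α} {M : Finset (Finset α)} :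
    M ∈ perfMatchings S ↔ IsPerfectMatching S M := by
  classical
  rw [perfMatchings, mem_filter, and_iff_right_iff_imp]
  rintro ⟨-, -, hsup⟩
  exact mem_powerset.mpr fun b hb => mem_powerset.mpr (hsup ▸ le_sup (f := id) hb)

namespace IsPerfectMatching

theorem pairwiseDisjoint {α : Type*} [DecidableEq α] {S : Finset α} {M : Finset (Finset α)}
    (h : IsPerfectMatching S M) : (M : Set (Finset α)).PairwiseDisjoint id :=
  fun b hb c hc hne => h.2.1 b hb c hc hne

theorem card_eq {α : Type*} [DecidableEq α] {S : Finset α} {M : Finset (Finset α)}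
    (h : IsPerfectMatching S M) : #S = 2 * #M := by
  rw [← h.2.2, sup_eq_biUnion, card_biUnion h.pairwiseDisjoint, mul_comm]
  exact sum_const_nat h.1

variable {S : Finset ℕ} {M : Finset (Finset ℕ)}

theorem coe_blockList (h : IsPerfectMatching S M) :
    (blockList M : Multiset (Finset ℕ)) = M.val :=
  coe_blockList_of_pairwiseDisjoint h.pairwiseDisjoint fun b hb =>
    card_pos.mp (by rw [h.1 b hb]; exact two_pos)

theorem mem_blockList (h : IsPerfectMatching S M) {b : Finset ℕ} : b ∈ blockList M ↔ b ∈ M := by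
  rw [← Multiset.mem_coe, h.coe_blockList, mem_val]

theorem length_blockList (h : IsPerfectMatching S M) : (blockList M).length = #M := by
  rw [← Multiset.coe_card, h.coe_blockList, card_def]

theorem pairwise_disjoint_blockList (h : IsPerfectMatching S M) :
    (blockList M).Pairwise Disjoint := by
  have nodup : (blockList M).Nodup := by
    rw [← Multiset.coe_nodup, h.coe_blockList]
    exact M.nodup
  exact nodup.imp_of_mem fun hb hc hne =>
    h.2.1 _ (h.mem_blockList.mp hb) _ (h.mem_blockList.mp hc) hne

theorem inversions_flatList (h : IsPerfectMatching S M) :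
    inversions (flatList M) =
      ∑ k ∈ range (#M),
        SP ((blockList M).getD k ∅) (((blockList M).drop k).foldr (· ∪ ·) ∅) := by
  rw [flatList_eq_flatMap_sort fun b hb => h.1 b (h.mem_blockList.mp hb),
    inversions_flatMap_sort h.pairwise_disjoint_blockList, h.length_blockList]

end IsPerfectMatching

/-- `sgn(𝒫) = (−1)^{Σ_{k=1}^{m} S(P_k, P_k ∪ P_{k+1} ∪ … ∪ P_m)}` for a perfect
matching `𝒫 = P_1|…|P_m` in canonical form. -/
theorem stmt3 (m : ℕ) (hm : 1 ≤ m) (S : Finset ℕ) (hS : S.card = 2 * m)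
    (M : Finset (Finset ℕ)) (hM : M ∈ perfMatchings S) :
    pmSign M =
      (-1) ^ (∑ K ∈ Finset.range m,
        SP ((blockList M).getD K ∅) (((blockList M).drop K).foldr (· ∪ ·) ∅)) := by
  have h : IsPerfectMatching S M := mem_perfMatchings.mp hM
  have card_blocks : #M = m := by
    have := h.card_eq
    omega
  rw [pmSign, h.inversions_flatList, card_blocks]
end

section
/- Let F ⊆ P ⊆ ℕ be finite sets. Then S(F, P) + S(P \ F, P) = |F| · (|P| − |F|). -/
/-!
For `F ⊆ P`, the triangular number subtracted in `S(F, P)` is exactly what the elements of `F`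
contribute to their own positions, so `S(F, P)` counts the pairs `(p, f) ∈ (P \ F) × F` with
`p < f`. Likewise `S(P \ F, P)` counts those with `f < p`, and each of the `|F| · |P \ F|` pairs is
of exactly one of the two kinds.
-/

section ltPairs

open Finset

variable {α : Type*} [LinearOrder α] {s t u : Finset α}

/-- The strictly increasing pairs in `s × t`. When `s` and `t` are disjoint, these record how the
two sets are shuffled inside `s ∪ t`. -/
def ltPairs (s t : Finset α) : Finset (α × α) := {x ∈ s ×ˢ t | x.1 < x.2}

lemma mem_ltPairs {x : α × α} : x ∈ ltPairs s t ↔ (x.1 ∈ s ∧ x.2 ∈ t) ∧ x.1 < x.2 := by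
  rw [ltPairs, mem_filter, mem_product]

lemma card_ltPairs_eq_sum (s t : Finset α) : #(ltPairs s t) = ∑ b ∈ t, #{a ∈ s | a < b} := by
  simp only [ltPairs, card_filter, sum_product_right]

lemma card_ltPairs_self (s : Finset α) : #(ltPairs s s) = (#s).choose 2 :=
  card_product_filter_lt

lemma card_ltPairs_add_card_ltPairs_sdiff (h : u ⊆ s) (t : Finset α) :
    #(ltPairs u t) + #(ltPairs (s \ u) t) = #(ltPairs s t) := by
  have hdisj : Disjoint (ltPairs u t) (ltPairs (s \ u) t) := by
    grind [disjoint_left, mem_ltPairs]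
  have hunion : ltPairs u t ∪ ltPairs (s \ u) t = ltPairs s t := by
    grind [mem_ltPairs]
  rw [← card_union_of_disjoint hdisj, hunion]

lemma card_ltPairs_swap (s t : Finset α) :
    #(ltPairs t s) = #{x ∈ s ×ˢ t | x.2 < x.1} :=
  card_equiv (Equiv.prodComm α α) (by grind [mem_ltPairs])

lemma card_ltPairs_add_card_ltPairs_swap (h : Disjoint s t) :
    #(ltPairs s t) + #(ltPairs t s) = #s * #t := by
  have not_lt_iff_gt : ∀ x ∈ s ×ˢ t, ¬ x.1 < x.2 ↔ x.2 < x.1 := by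
    intro x hx
    rw [mem_product] at hx
    exact not_lt.trans (Ne.le_iff_lt (h.symm.forall_ne_finset hx.2 hx.1))
  rw [card_ltPairs_swap s, ← filter_congr not_lt_iff_gt, ltPairs,
    card_filter_add_card_filter_not, card_product]

lemma sum_card_filter_lt_add_one (h : s ⊆ t) :
    ∑ b ∈ s, (#{a ∈ t | a < b} + 1) = #(ltPairs (t \ s) s) + (#s + 1).choose 2 := by
  calc ∑ b ∈ s, (#{a ∈ t | a < b} + 1)
      = #(ltPairs t s) + #s := by rw [sum_add_distrib, ← card_ltPairs_eq_sum, card_eq_sum_ones s]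
    _ = #(ltPairs (t \ s) s) + ((#s).choose 2 + #s) := by
      rw [← card_ltPairs_add_card_ltPairs_sdiff h, card_ltPairs_self]; ring
    _ = #(ltPairs (t \ s) s) + (#s + 1).choose 2 := by
      rw [Nat.choose_succ_succ' (#s) 1, Nat.choose_one_right, add_comm (#s)]

end ltPairs

lemma SP_eq_card_ltPairs_sdiff {F P : Finset ℕ} (h : F ⊆ P) :
    SP F P = (ltPairs (P \ F) F).card := by
  have triangular : F.card * (F.card + 1) / 2 = (F.card + 1).choose 2 := by
    rw [Nat.choose_two_right, Nat.add_sub_cancel, mul_comm]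
  rw [SP, triangular, sum_card_filter_lt_add_one h, Nat.add_sub_cancel]

/-- `S(F, P) + S(P \ F, P) = |F| · (|P| − |F|)`. -/
theorem stmt7 (F P : Finset ℕ) (hFP : F ⊆ P) :
    SP F P + SP (P \ F) P = F.card * (P.card - F.card) := by
  rw [SP_eq_card_ltPairs_sdiff hFP, SP_eq_card_ltPairs_sdiff Finset.sdiff_subset,
    Finset.sdiff_sdiff_eq_self hFP, add_comm,
    card_ltPairs_add_card_ltPairs_swap Finset.disjoint_sdiff, Finset.card_sdiff_of_subset hFP]
end

section
/- Let F ⊆ P ⊆ ℕ be finite sets and let F' ⊆ F. Then S(F \ F', P \ F') = S(F, P) − Σ_{l ∈ F'}[S({l}, P) − S({l}, F)] = S(F, P) − S(F', P) + S(F', F) (equalities of integers). -/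
/-!
The positions of the elements of `F` within `F` itself sum to `r (r + 1) / 2`, so `S(F, P)` counts
the pairs `p < i` with `i ∈ F` and `p ∈ P \ F`. Removing `F'` from both `F` and `P` leaves `P \ F`
unchanged, so exactly the pairs with `i ∈ F'` are lost; both `S(F', P) - S(F', F)` and the sum
over singletons count these.
-/

section CrossInversions

open Finset

variable {α : Type*} [LinearOrder α]

/-- The number of inversions between `A` and `B`: pairs `(a, b) ∈ A × B` with `b < a`. Unlike
`SP`, it is additive over disjoint unions in each argument; it is encoded as a sum over `a` to
match `SP`. -/
def crossInversions (A B : Finset α) : ℕ :=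
  ∑ a ∈ A, #{b ∈ B | b < a}

theorem crossInversions_sdiff_left_add {A A' : Finset α} (h : A' ⊆ A) (B : Finset α) :
    crossInversions (A \ A') B + crossInversions A' B = crossInversions A B :=
  sum_sdiff h

theorem crossInversions_sdiff_right_add (A : Finset α) {B B' : Finset α} (h : B' ⊆ B) :
    crossInversions A (B \ B') + crossInversions A B' = crossInversions A B := by
  unfold crossInversions
  rw [← sum_add_distrib]
  refine sum_congr rfl fun a _ => ?_
  rw [← card_union_of_disjoint (disjoint_filter_filter sdiff_disjoint), ← filter_union,
    sdiff_union_of_subset h]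

theorem crossInversions_self (A : Finset α) : crossInversions A A = (#A).choose 2 := by
  induction A using Finset.induction_on_max with
  | empty => rfl
  | insert m s hm ih =>
    have hms : m ∉ s := fun h => (hm m h).false
    have below_max : {b ∈ insert m s | b < m} = s := by
      rw [filter_insert, if_neg (lt_irrefl m), filter_true_of_mem hm]
    have below_of_mem : ∀ a ∈ s, #{b ∈ insert m s | b < a} = #{b ∈ s | b < a} := fun a ha => by
      rw [filter_insert, if_neg (hm a ha).not_gt]
    calc crossInversions (insert m s) (insert m s)
        = #s + crossInversions s s := by
          unfold crossInversions
          rw [sum_insert hms, below_max, sum_congr rfl below_of_mem]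
      _ = (#(insert m s)).choose 2 := by
          rw [ih, card_insert_of_notMem hms, Nat.choose_succ_succ', Nat.choose_one_right]

end CrossInversions

section SP

open Finset

theorem SP_eq_crossInversions_sub_choose (F P : Finset ℕ) :
    SP F P = crossInversions F P - (#F).choose 2 := by
  have triangle : #F * (#F + 1) / 2 = (#F).choose 2 + #F := by
    rw [Nat.choose_two_right, ← Nat.triangle_succ, Nat.add_sub_cancel, mul_comm]
  have shift : ∑ i ∈ F, (#{p ∈ P | p < i} + 1) = crossInversions F P + #F := by
    rw [sum_add_distrib, sum_const, smul_eq_mul, mul_one, crossInversions]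
  rw [SP, shift, triangle, Nat.add_sub_add_right]

theorem SP_eq_crossInversions_sdiff {F P : Finset ℕ} (h : F ⊆ P) :
    SP F P = crossInversions F (P \ F) := by
  rw [SP_eq_crossInversions_sub_choose, ← crossInversions_sdiff_right_add F h,
    crossInversions_self, Nat.add_sub_cancel]

theorem SP_sdiff_sdiff {F P F' : Finset ℕ} (hFP : F ⊆ P) (hF' : F' ⊆ F) :
    SP (F \ F') (P \ F') = crossInversions (F \ F') (P \ F) := by
  rw [SP_eq_crossInversions_sdiff (sdiff_subset_sdiff hFP subset_rfl),
    sdiff_sdiff_sdiff_cancel_right hF']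

theorem SP_add_crossInversions_sdiff {A F P : Finset ℕ} (hAF : A ⊆ F) (hFP : F ⊆ P) :
    SP A F + crossInversions A (P \ F) = SP A P := by
  have hAP := hAF.trans hFP
  have in_F := crossInversions_sdiff_right_add A hAF
  have in_P := crossInversions_sdiff_right_add A hAP
  have F_in_P := crossInversions_sdiff_right_add A hFP
  rw [SP_eq_crossInversions_sdiff hAF, SP_eq_crossInversions_sdiff hAP]
  omega

theorem sum_SP_singleton (A P : Finset ℕ) : ∑ l ∈ A, SP {l} P = crossInversions A P :=
  sum_congr rfl fun l _ => by simp [SP]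

end SP

/-- `S(F \ F', P \ F') = S(F,P) − Σ_{l ∈ F'}[S({l},P) − S({l},F)]
= S(F,P) − S(F',P) + S(F',F)` for `F' ⊆ F ⊆ P`. -/
theorem stmt9 (F P F' : Finset ℕ) (hFP : F ⊆ P) (hF' : F' ⊆ F) :
    (SP (F \ F') (P \ F') : ℤ)
        = (SP F P : ℤ) - ∑ l ∈ F', ((SP {l} P : ℤ) - (SP {l} F : ℤ)) ∧
      (SP (F \ F') (P \ F') : ℤ) = (SP F P : ℤ) - (SP F' P : ℤ) + (SP F' F : ℤ) := by
  have split_left : SP (F \ F') (P \ F') + crossInversions F' (P \ F) = SP F P := by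
    rw [SP_sdiff_sdiff hFP hF', SP_eq_crossInversions_sdiff hFP,
      crossInversions_sdiff_left_add hF']
  have sum_singletons : ∑ l ∈ F', ((SP {l} P : ℤ) - (SP {l} F : ℤ))
      = crossInversions F' (P \ F) := by
    rw [Finset.sum_sub_distrib, ← Nat.cast_sum, ← Nat.cast_sum, sum_SP_singleton,
      sum_SP_singleton, ← crossInversions_sdiff_right_add F' hFP]
    push_cast
    ring
  have split_right := SP_add_crossInversions_sdiff hF' hFP
  constructor
  · rw [sum_singletons]
    omega
  · omega
end
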